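/- Let E be a measurable space, μ a probability measure on E, and (κ_t)_{t≥0} a semigroup of Markov kernels on E with μ invariant for every κ_t. Suppose there exists a family of Markov kernels (κ̂_t)_{t≥0} dual to (κ_t) with respect to μ, i.e. ∫ f(x) (κ_t g)(x) μ(dx) = ∫ g(x) (κ̂_t f)(x) μ(dx) for all bounded measurable f, g and all t ≥ 0. Assume there exists t₁ > 0 such that ‖κ̂_{t₁} g‖_{L²(μ)} ≤ ‖g‖_{L^{4/3}(μ)} for every bounded measurable g : E → ℝ. Then there exist constants c₀, λ₀ > 0, depending only on t₁ (in particular independent of N), such that for every N ≥ 1, every probability measure ν^N on E^N, and every t ≥ 0: Ent( ν^N κ_t^{⊗N} | μ^{⊗N} ) ≤ c₀ e^{−λ₀ t} Ent( ν^N | μ^{⊗N} ), where κ_t^{⊗N} is the N-fold product kernel acting on measures by (ν κ^{⊗N})(A) = ∫ κ^{⊗N}(𝐱, A) ν(d𝐱). -/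

import Mathlib

open MeasureTheory ProbabilityTheory
open scoped ENNReal NNReal

/-- A bounded measurable real-valued function. -/
def BddMeasurableFn {E : Type*} [MeasurableSpace E] (f : E → ℝ) : Prop :=
  Measurable f ∧ ∃ C : ℝ, ∀ x, |f x| ≤ C

/-- `(κ t)_{t ≥ 0}` is a semigroup of Markov kernels. -/
structure IsMarkovSemigroup {E : Type*} [MeasurableSpace E] (κ : ℝ → Kernel E E) : Prop where
  markov : ∀ t : ℝ, IsMarkovKernel (κ t)
  id_zero : κ 0 = Kernel.id
  semigroup : ∀ s t : ℝ, 0 ≤ s → 0 ≤ t → κ (t + s) = (κ t) ∘ₖ (κ s)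

open Classical in
/-- The relative entropy `Ent(ν|μ) = ∫ log (dν/dμ) dν` if `ν ≪ μ` (and `+∞` otherwise). -/
noncomputable def relEnt {E : Type*} [MeasurableSpace E] (ν μ : Measure E) : ℝ≥0∞ :=
  if ν ≪ μ ∧ Integrable (llr ν μ) ν then ENNReal.ofReal (∫ x, llr ν μ x ∂ν) else ∞


theorem cs_lintegral {X : Type*} [MeasurableSpace X] (μ : Measure X) {f g : X → ℝ≥0∞}
    (hf : Measurable f) (hg : Measurable g) :
    ∫⁻ a, f a * g a ∂μ ≤ (∫⁻ a, f a ^ 2 ∂μ) ^ (1 / 2 : ℝ) * (∫⁻ a, g a ^ 2 ∂μ) ^ (1 / 2 : ℝ) := by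
  have h := ENNReal.lintegral_mul_le_Lp_mul_Lq μ (p := 2) (q := 2)
    Real.HolderConjugate.two_two hf.aemeasurable hg.aemeasurable
  simpa [ENNReal.rpow_two] using h

theorem minkowski_two {X Y : Type*} [MeasurableSpace X] [MeasurableSpace Y]
    (μ : Measure X) (ρ : Measure Y) [SFinite μ] [SFinite ρ] {F : X → Y → ℝ≥0∞}
    (hF : Measurable (Function.uncurry F)) :
    ∫⁻ a, (∫⁻ z, F a z ∂ρ) ^ 2 ∂μ ≤ (∫⁻ z, (∫⁻ a, F a z ^ 2 ∂μ) ^ (1 / 2 : ℝ) ∂ρ) ^ 2 := by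
  have hFa : ∀ a, Measurable (F a) := fun a => hF.comp measurable_prodMk_left
  have hFz : ∀ z, Measurable (fun a => F a z) := fun z => hF.comp measurable_prodMk_right
  have hS : Measurable (fun z => (∫⁻ a, F a z ^ 2 ∂μ) ^ (1 / 2 : ℝ)) := by
    refine Measurable.pow_const ?_ _
    refine Measurable.lintegral_prod_left (f := fun a z => F a z ^ 2) ?_
    exact hF.pow_const 2
  have hI : Measurable (fun a => ∫⁻ z, F a z ∂ρ) := hF.lintegral_prod_right
  calc ∫⁻ a, (∫⁻ z, F a z ∂ρ) ^ 2 ∂μ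
      = ∫⁻ a, ∫⁻ z, F a z * (∫⁻ z', F a z' ∂ρ) ∂ρ ∂μ := by
        refine lintegral_congr fun a => ?_
        rw [lintegral_mul_const _ (hFa a), sq]
    _ = ∫⁻ z, ∫⁻ a, F a z * (∫⁻ z', F a z' ∂ρ) ∂μ ∂ρ := by
        refine lintegral_lintegral_swap ?_
        exact (hF.mul (hI.comp measurable_fst)).aemeasurable
    _ = ∫⁻ z, ∫⁻ z', ∫⁻ a, F a z * F a z' ∂μ ∂ρ ∂ρ := by
        refine lintegral_congr fun z => ?_
        rw [← lintegral_lintegral_swap]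
        · refine lintegral_congr fun a => ?_
          rw [lintegral_const_mul _ (hFa a)]
        · exact (((hFz z).comp measurable_fst).mul hF).aemeasurable
    _ ≤ ∫⁻ z, ∫⁻ z', (∫⁻ a, F a z ^ 2 ∂μ) ^ (1 / 2 : ℝ) *
          (∫⁻ a, F a z' ^ 2 ∂μ) ^ (1 / 2 : ℝ) ∂ρ ∂ρ :=
        lintegral_mono fun z => lintegral_mono fun z' => cs_lintegral μ (hFz z) (hFz z')
    _ = _ := by
        simp_rw [lintegral_const_mul _ hS]
        rw [lintegral_mul_const _ hS, sq]

theorem lintegral_pi_succ {E : Type*} [MeasurableSpace E] {n : ℕ} (ρ : Fin (n + 1) → Measure E)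
    [∀ i, SigmaFinite (ρ i)] {G : (Fin (n + 1) → E) → ℝ≥0∞} (hG : Measurable G) :
    ∫⁻ y, G y ∂(Measure.pi ρ) =
      ∫⁻ a, ∫⁻ z, G (Fin.cons a z) ∂(Measure.pi fun j : Fin n => ρ j.succ) ∂(ρ 0) := by
  have h := (measurePreserving_piFinSuccAbove (fun i => ρ i) 0).symm
  rw [← h.lintegral_comp hG, lintegral_prod]
  · simp only [Fin.zero_succAbove]
    refine lintegral_congr fun a => lintegral_congr fun z => ?_
    congr 1
    simp [MeasurableEquiv.piFinSuccAbove, Fin.insertNthEquiv]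
  · exact (hG.comp (MeasurableEquiv.measurable _)).aemeasurable

theorem measurable_piK {E : Type*} [MeasurableSpace E] {N : ℕ} (κ : Kernel E E)
    [IsMarkovKernel κ] :
    Measurable (fun x : Fin N → E => Measure.pi fun i => κ (x i)) := by
  refine Measurable.measure_of_isPiSystem_of_isProbabilityMeasure generateFrom_pi.symm isPiSystem_pi ?_
  rintro _ ⟨s, hs, rfl⟩
  simp only [Measure.pi_pi]
  refine Finset.measurable_prod _ fun i _ => ?_
  exact (κ.measurable_coe (hs i (Set.mem_univ i))).comp (measurable_pi_apply i)

/-- the product kernel -/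
noncomputable def piK {E : Type*} [MeasurableSpace E] (N : ℕ) (κ : Kernel E E)
    [IsMarkovKernel κ] : Kernel (Fin N → E) (Fin N → E) :=
  ⟨fun x => Measure.pi fun i => κ (x i), measurable_piK κ⟩

theorem piK_apply {E : Type*} [MeasurableSpace E] (N : ℕ) (κ : Kernel E E)
    [IsMarkovKernel κ] (x : Fin N → E) : piK N κ x = Measure.pi fun i => κ (x i) := rfl

instance {E : Type*} [MeasurableSpace E] (N : ℕ) (κ : Kernel E E)
    [IsMarkovKernel κ] : IsMarkovKernel (piK N κ) :=
  ⟨fun x => by rw [piK_apply]; infer_instance⟩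

theorem pi_bind_piK {E : Type*} [MeasurableSpace E] {N : ℕ} (κ : Kernel E E)
    [IsMarkovKernel κ] (ρ : Fin N → Measure E) [∀ i, IsProbabilityMeasure (ρ i)] :
    (Measure.pi ρ).bind (piK N κ) = Measure.pi fun i => (ρ i).bind κ := by
  symm
  refine Measure.pi_eq fun s hs => ?_
  rw [Measure.bind_apply (MeasurableSet.univ_pi hs) (piK N κ).measurable.aemeasurable]
  simp only [piK_apply, Measure.pi_pi]
  have := lintegral_prod_eq_prod_lintegral_of_indepFun (μ := Measure.pi ρ) Finset.univ
    (fun i ω => κ (ω i) (s i))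
    (iIndepFun_pi (X := fun i e => κ e (s i)) (fun i => (κ.measurable_coe (hs i)).aemeasurable))
    (fun i => (κ.measurable_coe (hs i)).comp (measurable_pi_apply i))
  rw [this]
  refine Finset.prod_congr rfl fun i _ => ?_
  rw [Measure.bind_apply (hs i) κ.measurable.aemeasurable]
  exact (measurePreserving_eval ρ i).lintegral_comp (κ.measurable_coe (hs i))

theorem tensor {E : Type*} [MeasurableSpace E] (μ : Measure E) [IsProbabilityMeasure μ]
    (κ : Kernel E E) [IsMarkovKernel κ]
    (h : ∀ g : E → ℝ≥0∞, Measurable g →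
      ∫⁻ x, (∫⁻ y, g y ∂(κ x)) ^ 4 ∂μ ≤ (∫⁻ x, g x ^ 2 ∂μ) ^ 2) (N : ℕ) :
    ∀ g : (Fin N → E) → ℝ≥0∞, Measurable g →
      ∫⁻ x, (∫⁻ y, g y ∂(piK N κ x)) ^ 4 ∂(Measure.pi fun _ => μ) ≤
        (∫⁻ x, g x ^ 2 ∂(Measure.pi fun _ => μ)) ^ 2 := by
  induction N with
  | zero =>
    intro g hg
    have hc : g = fun _ => g (fun i => i.elim0) := by
      funext x
      congr 1
      exact Subsingleton.elim _ _
    rw [hc]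
    simp only [lintegral_const, measure_univ, mul_one]
    rw [← pow_mul]
  | succ n ih =>
    intro g hg
    have hcons : Measurable (fun p : E × (Fin n → E) => (Fin.cons p.1 p.2 : Fin (n + 1) → E)) := by
      refine measurable_pi_lambda _ fun i => ?_
      refine Fin.cases ?_ (fun j => ?_) i
      · simpa using measurable_fst
      · simpa [Function.comp_def] using (measurable_pi_apply j).comp (measurable_snd (α := E) (β := Fin n → E))
    have hgc := hg.comp hcons
    have hH : Measurable (fun p : (Fin n → E) × E => ∫⁻ z, g (Fin.cons p.2 z) ∂(piK n κ p.1)) := by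
      have := Measurable.lintegral_kernel_prod_right' (κ := (piK n κ).comap (Prod.fst : (Fin n → E) × E → _) measurable_fst)
        (f := fun q : ((Fin n → E) × E) × (Fin n → E) => g (Fin.cons q.1.2 q.2))
        (hg.comp (hcons.comp ((measurable_snd.comp measurable_fst).prodMk measurable_snd)))
      simpa [Kernel.comap_apply] using this
    have hP : ∀ b w, ∫⁻ y, g y ∂(piK (n + 1) κ (Fin.cons b w)) =
        ∫⁻ a, ∫⁻ z, g (Fin.cons a z) ∂(piK n κ w) ∂(κ b) := by
      intro b w
      rw [piK_apply, lintegral_pi_succ _ hg]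
      simp [piK_apply]
    have hPm : Measurable (fun x => (∫⁻ y, g y ∂(piK (n + 1) κ x)) ^ 4) :=
      hg.lintegral_kernel.pow_const 4
    have hS : Measurable (fun z : Fin n → E => (∫⁻ a, g (Fin.cons a z) ^ 2 ∂μ) ^ (1 / 2 : ℝ)) := by
      refine Measurable.pow_const ?_ _
      refine Measurable.lintegral_prod_left (f := fun a z => g (Fin.cons a z) ^ 2) ?_
      exact hgc.pow_const 2
    rw [lintegral_pi_succ _ hPm, lintegral_pi_succ _ (hg.pow_const 2)]
    rw [lintegral_lintegral_swap (f := fun b w => (∫⁻ y, g y ∂(piK (n + 1) κ (Fin.cons b w))) ^ 4)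
        (hPm.comp hcons).aemeasurable,
      lintegral_lintegral_swap (f := fun a z => g (Fin.cons a z) ^ 2)
        (hgc.pow_const 2).aemeasurable]
    calc ∫⁻ w, ∫⁻ b, (∫⁻ y, g y ∂(piK (n + 1) κ (Fin.cons b w))) ^ 4 ∂μ ∂(Measure.pi fun _ => μ)
        ≤ ∫⁻ w, (∫⁻ z, (∫⁻ a, g (Fin.cons a z) ^ 2 ∂μ) ^ (1 / 2 : ℝ) ∂(piK n κ w)) ^ 4
            ∂(Measure.pi fun _ => μ) := by
          refine lintegral_mono fun w => ?_
          simp only [hP]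
          refine (h (fun a => ∫⁻ z, g (Fin.cons a z) ∂(piK n κ w))
            (hH.comp measurable_prodMk_left)).trans ?_
          have := minkowski_two μ (piK n κ w) (F := fun a z => g (Fin.cons a z)) hgc
          calc _ ≤ _ := pow_le_pow_left' this 2
            _ = _ := by rw [← pow_mul]
      _ ≤ _ := ih _ hS
      _ = _ := by
          congr 2
          funext z
          rw [← ENNReal.rpow_two, ← ENNReal.rpow_mul]
          norm_num

theorem BddMeasurableFn.integrable' {E : Type*} [MeasurableSpace E] {f : E → ℝ}
    (hf : BddMeasurableFn f) (μ : Measure E) [IsFiniteMeasure μ] : Integrable f μ := by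
  obtain ⟨hm, C, hC⟩ := hf
  exact Integrable.of_bound hm.aestronglyMeasurable C (ae_of_all _ hC)

theorem BddMeasurableFn.kernel {E : Type*} [MeasurableSpace E] {f : E → ℝ}
    (hf : BddMeasurableFn f) (κ : Kernel E E) [IsMarkovKernel κ] :
    BddMeasurableFn (fun x => ∫ y, f y ∂(κ x)) := by
  obtain ⟨hm, C, hC⟩ := hf
  refine ⟨(hm.stronglyMeasurable.integral_kernel).measurable, C, fun x => ?_⟩
  have := norm_integral_le_of_norm_le_const (μ := κ x) (f := f) (C := C) (ae_of_all _ hC)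
  simpa using this

theorem one_dim_bdd {E : Type*} [MeasurableSpace E] (μ : Measure E) [IsProbabilityMeasure μ]
    (κ κhat : Kernel E E) [IsMarkovKernel κ] [IsMarkovKernel κhat]
    (hdual : ∀ f g : E → ℝ, BddMeasurableFn f → BddMeasurableFn g →
          ∫ x, f x * (∫ y, g y ∂(κ x)) ∂μ = ∫ x, g x * (∫ y, f y ∂(κhat x)) ∂μ)
    (hyp : ∀ g : E → ℝ, BddMeasurableFn g →
          eLpNorm (fun x => ∫ y, g y ∂(κhat x)) 2 μ ≤ eLpNorm g (4 / 3 : ℝ≥0∞) μ)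
    (g : E → ℝ) (hg : BddMeasurableFn g) (h0 : ∀ x, 0 ≤ g x) :
    ∫⁻ x, (∫⁻ y, ENNReal.ofReal (g y) ∂(κ x)) ^ 4 ∂μ ≤
      (∫⁻ x, ENNReal.ofReal (g x) ^ 2 ∂μ) ^ 2 := by
  set u : E → ℝ := fun x => ∫ y, g y ∂(κ x) with hu
  have hub : BddMeasurableFn u := hg.kernel κ
  have hu0 : ∀ x, 0 ≤ u x := fun x => integral_nonneg h0
  have hpow : ∀ k : ℕ, BddMeasurableFn (fun x => u x ^ k) := by
    intro k
    obtain ⟨hm, C, hC⟩ := hub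
    refine ⟨hm.pow_const k, C ^ k, fun x => ?_⟩
    rw [abs_pow]
    exact pow_le_pow_left₀ (abs_nonneg _) (hC x) k
  have h1 : ∀ x, ∫⁻ y, ENNReal.ofReal (g y) ∂(κ x) = ENNReal.ofReal (u x) := fun x =>
    (ofReal_integral_eq_lintegral_ofReal (hg.integrable' _) (ae_of_all _ h0)).symm
  simp only [h1]
  set A := ∫⁻ x, ENNReal.ofReal (u x) ^ 4 ∂μ with hA
  set B := ∫⁻ x, ENNReal.ofReal (g x) ^ 2 ∂μ with hB
  set v : E → ℝ := fun x => ∫ y, u y ^ 3 ∂(κhat x) with hv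
  have hvb : BddMeasurableFn v := (hpow 3).kernel κhat
  have hv0 : ∀ x, 0 ≤ v x := fun x => integral_nonneg fun y => pow_nonneg (hu0 y) 3
  have hA1 : A = ENNReal.ofReal (∫ x, u x ^ 4 ∂μ) := by
    rw [ofReal_integral_eq_lintegral_ofReal ((hpow 4).integrable' _)
      (ae_of_all _ fun x => pow_nonneg (hu0 x) 4)]
    exact lintegral_congr fun x => (ENNReal.ofReal_pow (hu0 x) 4).symm
  have hAtop : A ≠ ∞ := by rw [hA1]; exact ENNReal.ofReal_ne_top
  have hA2 : A = ∫⁻ x, ENNReal.ofReal (g x) * ENNReal.ofReal (v x) ∂μ := by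
    have e : ∫ x, u x ^ 4 ∂μ = ∫ x, g x * v x ∂μ := by
      rw [← hdual _ g (hpow 3) hg]
      refine integral_congr_ae (ae_of_all _ fun x => ?_)
      simp only [hu]; ring
    have hgv : BddMeasurableFn (fun x => g x * v x) := by
      obtain ⟨hm, C, hC⟩ := hg
      obtain ⟨hm', C', hC'⟩ := hvb
      refine ⟨hm.mul hm', C * C', fun x => ?_⟩
      rw [abs_mul]
      exact mul_le_mul (hC x) (hC' x) (abs_nonneg _) ((abs_nonneg _).trans (hC x))
    rw [hA1, e, ofReal_integral_eq_lintegral_ofReal (hgv.integrable' _)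
      (ae_of_all _ fun x => mul_nonneg (h0 x) (hv0 x))]
    exact lintegral_congr fun x => ENNReal.ofReal_mul (h0 x)
  have hV : (∫⁻ x, ENNReal.ofReal (v x) ^ 2 ∂μ) ^ (1 / 2 : ℝ) ≤ A ^ (3 / 4 : ℝ) := by
    have := hyp _ (hpow 3)
    have h43 : (4 / 3 : ℝ≥0∞).toReal = 4 / 3 := by simp
    rw [eLpNorm_eq_lintegral_rpow_enorm_toReal (by simp) (by simp),
      eLpNorm_eq_lintegral_rpow_enorm_toReal (by simp [ENNReal.div_eq_zero_iff]) (by simp [ENNReal.div_eq_top]), h43] at this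
    have e1 : ∀ x, ENNReal.ofReal (v x) ^ 2 = ‖v x‖ₑ ^ (2 : ℝ≥0∞).toReal := by
      intro x
      rw [Real.enorm_of_nonneg (hv0 x)]
      simp
    have e2 : ∀ x, ENNReal.ofReal (u x) ^ 4 = ‖u x ^ 3‖ₑ ^ (4 / 3 : ℝ) := by
      intro x
      rw [Real.enorm_of_nonneg (pow_nonneg (hu0 x) 3), ENNReal.ofReal_pow (hu0 x),
        ← ENNReal.rpow_natCast, ← ENNReal.rpow_natCast, ← ENNReal.rpow_mul]
      norm_num
    rw [hA]
    simp only [e1, e2]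
    have e34 : (3 / 4 : ℝ) = 1 / (4 / 3 : ℝ) := by norm_num
    rw [e34]
    simpa using this
  have key : A ≤ B ^ (1 / 2 : ℝ) * A ^ (3 / 4 : ℝ) := by
    calc A = _ := hA2
      _ ≤ _ := cs_lintegral μ hg.1.ennreal_ofReal hvb.1.ennreal_ofReal
      _ ≤ _ := mul_le_mul_right hV _
  by_cases hAz : A = 0
  · rw [hAz]; exact zero_le
  have h34 : A ^ (3 / 4 : ℝ) ≠ 0 := by simp [ENNReal.rpow_eq_zero_iff, hAz, hAtop]
  have h34' : A ^ (3 / 4 : ℝ) ≠ ∞ := by simp [ENNReal.rpow_eq_top_iff, hAz, hAtop]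
  have e : A = A ^ (1 / 4 : ℝ) * A ^ (3 / 4 : ℝ) := by
    rw [← ENNReal.rpow_add _ _ hAz hAtop]; norm_num
  have key2 : A ^ (1 / 4 : ℝ) ≤ B ^ (1 / 2 : ℝ) := by
    exact (ENNReal.mul_le_mul_iff_left h34 h34').1 (e.symm.le.trans key)
  calc A = (A ^ (1 / 4 : ℝ)) ^ (4 : ℝ) := by rw [← ENNReal.rpow_mul]; norm_num
    _ ≤ (B ^ (1 / 2 : ℝ)) ^ (4 : ℝ) := ENNReal.rpow_le_rpow key2 (by norm_num)
    _ = B ^ 2 := by rw [← ENNReal.rpow_mul, ← ENNReal.rpow_two]; norm_num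

theorem one_dim {E : Type*} [MeasurableSpace E] (μ : Measure E) [IsProbabilityMeasure μ]
    (κ κhat : Kernel E E) [IsMarkovKernel κ] [IsMarkovKernel κhat]
    (hdual : ∀ f g : E → ℝ, BddMeasurableFn f → BddMeasurableFn g →
          ∫ x, f x * (∫ y, g y ∂(κ x)) ∂μ = ∫ x, g x * (∫ y, f y ∂(κhat x)) ∂μ)
    (hyp : ∀ g : E → ℝ, BddMeasurableFn g →
          eLpNorm (fun x => ∫ y, g y ∂(κhat x)) 2 μ ≤ eLpNorm g (4 / 3 : ℝ≥0∞) μ)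
    (g : E → ℝ≥0∞) (hg : Measurable g) :
    ∫⁻ x, (∫⁻ y, g y ∂(κ x)) ^ 4 ∂μ ≤ (∫⁻ x, g x ^ 2 ∂μ) ^ 2 := by
  have hgn : ∀ n : ℕ, Measurable (fun y => min (g y) n) := fun n => hg.min measurable_const
  have hmono : ∀ y, Monotone (fun n : ℕ => min (g y) (n : ℝ≥0∞)) := fun y n k hnk =>
    min_le_min_left _ (by exact_mod_cast hnk)
  have hb : ∀ n : ℕ, ∫⁻ x, (∫⁻ y, min (g y) n ∂(κ x)) ^ 4 ∂μ ≤ (∫⁻ x, g x ^ 2 ∂μ) ^ 2 := by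
    intro n
    have hfin : ∀ y, min (g y) (n : ℝ≥0∞) ≠ ∞ := fun y =>
      ne_top_of_le_ne_top (ENNReal.natCast_ne_top n) (min_le_right _ _)
    have := one_dim_bdd μ κ κhat hdual hyp (fun y => (min (g y) n).toReal)
      ⟨(hgn n).ennreal_toReal, n, fun x => by
        rw [abs_of_nonneg ENNReal.toReal_nonneg]
        have := ENNReal.toReal_mono (ENNReal.natCast_ne_top n) (min_le_right (g x) (n : ℝ≥0∞))
        simpa using this⟩ (fun x => ENNReal.toReal_nonneg)
    simp only [ENNReal.ofReal_toReal (hfin _)] at this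
    refine this.trans (pow_le_pow_left' (lintegral_mono fun x => pow_le_pow_left' (min_le_left _ _) 2) 2)
  have ht : ∀ y, Filter.Tendsto (fun n : ℕ => min (g y) (n : ℝ≥0∞)) Filter.atTop (nhds (g y)) := by
    intro y
    have : Filter.Tendsto (fun n : ℕ => min (g y) (n : ℝ≥0∞)) Filter.atTop (nhds (min (g y) ∞)) :=
      Filter.Tendsto.min tendsto_const_nhds ENNReal.tendsto_nat_nhds_top
    simpa using this
  have ht2 : ∀ x, Filter.Tendsto (fun n : ℕ => (∫⁻ y, min (g y) n ∂(κ x)) ^ 4) Filter.atTop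
      (nhds ((∫⁻ y, g y ∂(κ x)) ^ 4)) := fun x =>
    ((ENNReal.continuous_pow 4).tendsto _).comp (lintegral_tendsto_of_tendsto_of_monotone
      (fun n => (hgn n).aemeasurable) (ae_of_all _ hmono) (ae_of_all _ ht))
  have ht3 := lintegral_tendsto_of_tendsto_of_monotone (μ := μ)
    (f := fun (n : ℕ) x => (∫⁻ y, min (g y) n ∂(κ x)) ^ 4) (F := fun x => (∫⁻ y, g y ∂(κ x)) ^ 4)
    (fun n => ((hgn n).lintegral_kernel.pow_const 4).aemeasurable)
    (ae_of_all _ fun x n k hnk => pow_le_pow_left' (lintegral_mono fun y => hmono y hnk) 4)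
    (ae_of_all _ ht2)
  exact le_of_tendsto' ht3 hb

theorem integrable_exp_bdd {E : Type*} [MeasurableSpace E] {f : E → ℝ}
    (hf : BddMeasurableFn f) : BddMeasurableFn (fun x => Real.exp (f x)) := by
  obtain ⟨hm, C, hC⟩ := hf
  refine ⟨hm.exp, Real.exp C, fun x => ?_⟩
  rw [abs_of_pos (Real.exp_pos _)]
  exact Real.exp_le_exp.2 ((le_abs_self _).trans (hC x))

theorem dv_upper {X : Type*} [MeasurableSpace X] (ν m : Measure X) [IsProbabilityMeasure ν]
    [IsProbabilityMeasure m] (hac : ν ≪ m) (hint : Integrable (llr ν m) ν) (f : X → ℝ)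
    (hf : BddMeasurableFn f) :
    ∫ x, f x ∂ν ≤ ∫ x, llr ν m x ∂ν + Real.log (∫ x, Real.exp (f x) ∂m) := by
  have he : Integrable (fun x => Real.exp (f x)) m := (integrable_exp_bdd hf).integrable' m
  have h1 := integral_llr_tilted_right hac (hf.integrable' ν) he hint
  have h2 := integrable_llr_tilted_right hac (hf.integrable' ν) hint he
  have : IsProbabilityMeasure (m.tilted f) := isProbabilityMeasure_tilted he
  have h3 := InformationTheory.integral_llr_add_sub_measure_univ_nonneg
    (hac.trans (absolutelyContinuous_tilted he)) h2
  simp only [probReal_univ] at h3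
  linarith

theorem llr_nonneg_int {X : Type*} [MeasurableSpace X] (ν m : Measure X) [IsProbabilityMeasure ν]
    [IsProbabilityMeasure m] (hac : ν ≪ m) (hint : Integrable (llr ν m) ν) :
    0 ≤ ∫ x, llr ν m x ∂ν := by
  have := dv_upper ν m hac hint (fun _ => 0) ⟨measurable_const, 0, by simp⟩
  simpa using this

theorem dv_lower {X : Type*} [MeasurableSpace X] (ν m : Measure X) [IsProbabilityMeasure ν]
    [IsProbabilityMeasure m] (C : ℝ)
    (h : ∀ f : X → ℝ, BddMeasurableFn f → ∫ x, f x ∂ν ≤ C + Real.log (∫ x, Real.exp (f x) ∂m)) :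
    relEnt ν m ≤ ENNReal.ofReal C := by
  have hac : ν ≪ m := by
    refine Measure.AbsolutelyContinuous.mk fun s hs hms => ?_
    by_contra hne
    have hpos : 0 < ν.real s := by
      rw [measureReal_def]
      exact ENNReal.toReal_pos hne (measure_ne_top _ _)
    obtain ⟨n, hn⟩ := exists_nat_gt (C / ν.real s)
    have h1 := h (s.indicator fun _ => (n : ℝ)) ⟨measurable_const.indicator hs, n, fun x => by
      by_cases hx : x ∈ s <;> simp [hx]⟩
    have h2 : ∫ x, Real.exp (s.indicator (fun _ => (n : ℝ)) x) ∂m = 1 := by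
      have : (fun x => Real.exp (s.indicator (fun _ => (n : ℝ)) x)) =ᵐ[m] fun _ => 1 := by
        have : ∀ᵐ x ∂m, x ∉ s := by
          rw [ae_iff]; simpa using hms
        filter_upwards [this] with x hx
        simp [hx]
      rw [integral_congr_ae this]
      simp
    rw [h2, integral_indicator_const _ hs, Real.log_one] at h1
    rw [div_lt_iff₀ hpos] at hn
    simp only [smul_eq_mul] at h1
    linarith
  set d : X → ℝ := fun x => (ν.rnDeriv m x).toReal with hd
  have hdm : Measurable d := (Measure.measurable_rnDeriv ν m).ennreal_toReal
  have hd0 : ∀ x, 0 ≤ d x := fun x => ENNReal.toReal_nonneg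
  have hdint : Integrable d m := Measure.integrable_toReal_rnDeriv
  have hd1 : ∫ x, d x ∂m = 1 := by
    rw [hd, Measure.integral_toReal_rnDeriv hac]; simp
  have hdpos : ∀ᵐ x ∂ν, 0 < d x := by
    filter_upwards [Measure.rnDeriv_pos hac, hac.ae_le (Measure.rnDeriv_lt_top ν m)] with x hx hx'
    exact ENNReal.toReal_pos hx.ne' hx'.ne
  set F : ℕ → X → ℝ := fun n x => Real.log (max (min (d x) (n + 1)) (1 / (n + 1))) with hF
  have hn1 : ∀ n : ℕ, (0 : ℝ) < n + 1 := fun n => by positivity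
  have harg : ∀ (n : ℕ) x, 1 / ((n : ℝ) + 1) ≤ max (min (d x) (n + 1)) (1 / (n + 1)) :=
    fun n x => le_max_right _ _
  have hinv : ∀ n : ℕ, (0 : ℝ) < 1 / (n + 1) := fun n => by positivity
  have hinv1 : ∀ n : ℕ, (1 : ℝ) / (n + 1) ≤ 1 := fun n => by
    rw [div_le_one (hn1 n)]; linarith [(Nat.cast_nonneg n : (0 : ℝ) ≤ n)]
  have hle : ∀ (n : ℕ) x, max (min (d x) ((n : ℝ) + 1)) (1 / (n + 1)) ≤ n + 1 := fun n x =>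
    max_le (min_le_right _ _) ((hinv1 n).trans (by linarith [(Nat.cast_nonneg n : (0 : ℝ) ≤ n)]))
  have hFb : ∀ n, BddMeasurableFn (F n) := by
    intro n
    refine ⟨((hdm.min measurable_const).max measurable_const).log, Real.log (n + 1), fun x => ?_⟩
    rw [abs_le]
    constructor
    · have := Real.log_le_log (hinv n) (harg n x)
      rw [one_div, Real.log_inv] at this
      simpa [hF] using this
    · exact Real.log_le_log ((hinv n).trans_le (harg n x)) (hle n x)
  have hexp : ∀ n : ℕ, Real.log (∫ x, Real.exp (F n x) ∂m) ≤ 1 / ((n : ℝ) + 1) := by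
    intro n
    have h1 : ∫ x, Real.exp (F n x) ∂m ≤ 1 + 1 / ((n : ℝ) + 1) := by
      calc ∫ x, Real.exp (F n x) ∂m ≤ ∫ x, (d x + 1 / ((n : ℝ) + 1)) ∂m := by
            refine integral_mono ((integrable_exp_bdd (hFb n)).integrable' m)
              (hdint.add (integrable_const _)) fun x => ?_
            simp only [hF]
            rw [Real.exp_log ((hinv n).trans_le (harg n x))]
            refine max_le ((min_le_left _ _).trans ?_) ?_
            · linarith [hinv n]
            · linarith [hd0 x]
        _ = 1 + 1 / ((n : ℝ) + 1) := by
            rw [integral_add hdint (integrable_const _), hd1]; simp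
    have h0 : 0 < ∫ x, Real.exp (F n x) ∂m :=
      integral_exp_pos ((integrable_exp_bdd (hFb n)).integrable' m)
    have := Real.log_le_sub_one_of_pos h0
    linarith
  have hb : ∀ n : ℕ, ∫ x, F n x ∂ν ≤ C + 1 / ((n : ℝ) + 1) := fun n =>
    (h _ (hFb n)).trans (by linarith [hexp n])
  have hlim : ∀ᵐ x ∂ν, Filter.Tendsto (fun n => F n x) Filter.atTop (nhds (llr ν m x)) := by
    filter_upwards [hdpos] with x hx
    refine tendsto_const_nhds.congr' ?_
    obtain ⟨n0, hn0⟩ := exists_nat_gt (max (d x) (1 / d x))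
    filter_upwards [Filter.eventually_ge_atTop n0] with n hn
    have hnn : (n0 : ℝ) ≤ n := by exact_mod_cast hn
    have a1 : d x ≤ n + 1 := by linarith [le_max_left (d x) (1 / d x)]
    have a2 : 1 / d x ≤ n + 1 := by linarith [le_max_right (d x) (1 / d x)]
    have a3 : 1 / ((n : ℝ) + 1) ≤ d x := by
      rw [div_le_iff₀ (hn1 n)]
      rw [div_le_iff₀ hx] at a2
      linarith
    simp only [hF, llr_def]
    rw [min_eq_left a1, max_eq_left a3]
  have hge1 : ∀ n x, 1 ≤ d x → 0 ≤ F n x ∧ F n x ≤ Real.log (d x) := by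
    intro n x hx
    have a : (1 : ℝ) ≤ min (d x) (n + 1) :=
      le_min hx (by linarith [(Nat.cast_nonneg n : (0 : ℝ) ≤ n)])
    simp only [hF]
    rw [max_eq_left ((hinv1 n).trans a)]
    exact ⟨Real.log_nonneg a, Real.log_le_log (by linarith) (min_le_left _ _)⟩
  have hlt1 : ∀ n x, 0 < d x → d x < 1 → Real.log (d x) ≤ F n x ∧ F n x ≤ 0 := by
    intro n x h0 hx
    have a : min (d x) ((n : ℝ) + 1) = d x :=
      min_eq_left (by linarith [(Nat.cast_nonneg n : (0 : ℝ) ≤ n)])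
    simp only [hF]
    rw [a]
    exact ⟨Real.log_le_log h0 (le_max_left _ _),
      Real.log_nonpos (h0.le.trans (le_max_left _ _)) (max_le hx.le (hinv1 n))⟩
  have habs : ∀ n, ∀ᵐ x ∂ν, ‖F n x‖ ≤ |llr ν m x| := by
    intro n
    filter_upwards [hdpos] with x hx
    have e : llr ν m x = Real.log (d x) := rfl
    rw [e, Real.norm_eq_abs]
    rcases le_or_gt 1 (d x) with h1 | h1
    · obtain ⟨b1, b2⟩ := hge1 n x h1
      rw [abs_of_nonneg b1, abs_of_nonneg (b1.trans b2)]
      exact b2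
    · obtain ⟨b1, b2⟩ := hlt1 n x hx h1
      rw [abs_of_nonpos b2, abs_of_nonpos (b1.trans b2)]
      linarith
  have hnegp : ∀ n x, d x * max (-(F n x)) 0 ≤ 1 := by
    intro n x
    rcases (hd0 x).eq_or_lt with h0 | h0
    · rw [← h0]; simp
    rcases le_or_gt 1 (d x) with h1 | h1
    · rw [max_eq_right (by linarith [(hge1 n x h1).1])]; simp
    · obtain ⟨b1, b2⟩ := hlt1 n x h0 h1
      rw [max_eq_left (by linarith)]
      have h3 := Real.one_sub_inv_le_log_of_pos h0
      have h4 : -(F n x) ≤ (d x)⁻¹ - 1 := by linarith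
      calc d x * -(F n x) ≤ d x * ((d x)⁻¹ - 1) := mul_le_mul_of_nonneg_left h4 h0.le
        _ = 1 - d x := by rw [mul_sub, mul_inv_cancel₀ h0.ne']; ring
        _ ≤ 1 := by linarith
  have hneg : ∀ n, ∫ x, max (-(F n x)) 0 ∂ν ≤ 1 := by
    intro n
    rw [← integral_toReal_rnDeriv_mul hac]
    have hi : Integrable (fun x => (ν.rnDeriv m x).toReal * max (-(F n x)) 0) m := by
      refine Integrable.of_bound (hdm.mul ((hFb n).1.neg.max measurable_const)).aestronglyMeasurable
        1 (ae_of_all _ fun x => ?_)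
      rw [Real.norm_eq_abs, abs_of_nonneg (mul_nonneg (hd0 x) (le_max_right _ _))]
      exact hnegp n x
    calc _ ≤ ∫ x, (1 : ℝ) ∂m := integral_mono hi (integrable_const _) (hnegp n)
      _ = 1 := by simp
  have hnorm : ∀ n, ∫ x, ‖F n x‖ ∂ν ≤ C + 3 := by
    intro n
    have hmi : Integrable (fun x => max (-(F n x)) 0) ν := ((hFb n).integrable' ν).neg.sup (integrable_const 0)
    have e : ∀ x, ‖F n x‖ = F n x + 2 * max (-(F n x)) 0 := by
      intro x
      rw [Real.norm_eq_abs]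
      rcases le_total 0 (F n x) with h | h
      · rw [abs_of_nonneg h, max_eq_right (by linarith)]; ring
      · rw [abs_of_nonpos h, max_eq_left (by linarith)]; ring
    simp only [e]
    rw [integral_add ((hFb n).integrable' ν) (hmi.const_mul 2), integral_const_mul]
    linarith [hneg n, hb n, hinv1 n]
  have hint : Integrable (llr ν m) ν := by
    refine ⟨(measurable_llr ν m).aestronglyMeasurable, ?_⟩
    rw [hasFiniteIntegral_iff_enorm]
    refine lt_of_le_of_lt (b := ENNReal.ofReal (C + 3)) ?_ ENNReal.ofReal_lt_top
    calc ∫⁻ x, ‖llr ν m x‖ₑ ∂ν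
        = ∫⁻ x, Filter.liminf (fun n => ‖F n x‖ₑ) Filter.atTop ∂ν := by
          refine lintegral_congr_ae ?_
          filter_upwards [hlim] with x hx
          exact (hx.enorm.liminf_eq).symm
      _ ≤ Filter.liminf (fun n => ∫⁻ x, ‖F n x‖ₑ ∂ν) Filter.atTop :=
          lintegral_liminf_le fun n => (hFb n).1.enorm
      _ ≤ ENNReal.ofReal (C + 3) := by
          refine Filter.liminf_le_of_le (by isBoundedDefault) fun b hb' => ?_
          obtain ⟨n, hn⟩ := hb'.exists
          refine hn.trans ?_
          rw [← ofReal_integral_norm_eq_lintegral_enorm ((hFb n).integrable' ν)]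
          exact ENNReal.ofReal_le_ofReal (hnorm n)
  have hfin : ∫ x, llr ν m x ∂ν ≤ C := by
    have t1 : Filter.Tendsto (fun n => ∫ x, F n x ∂ν) Filter.atTop (nhds (∫ x, llr ν m x ∂ν)) :=
      tendsto_integral_of_dominated_convergence (fun x => |llr ν m x|)
        (fun n => (hFb n).1.aestronglyMeasurable) hint.abs
        habs hlim
    have t2 : Filter.Tendsto (fun n : ℕ => C + 1 / ((n : ℝ) + 1)) Filter.atTop (nhds (C + 0)) :=
      tendsto_const_nhds.add tendsto_one_div_add_atTop_nhds_zero_nat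
    rw [add_zero] at t2
    exact le_of_tendsto_of_tendsto' t1 t2 hb
  rw [relEnt, if_pos ⟨hac, hint⟩]
  exact ENNReal.ofReal_le_ofReal hfin

theorem contraction {X : Type*} [MeasurableSpace X] (m : Measure X) [IsProbabilityMeasure m]
    (P : Kernel X X) [IsMarkovKernel P] (a p : ℕ) (ha : 0 < a) (hp : 0 < p)
    (h : ∀ g : X → ℝ≥0∞, Measurable g →
      ∫⁻ x, (∫⁻ y, g y ∂(P x)) ^ (p * a) ∂m ≤ (∫⁻ x, g x ^ p ∂m) ^ a)
    (ν : Measure X) [IsProbabilityMeasure ν] :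
    relEnt (ν.bind P) m ≤ ENNReal.ofReal (1 / a) * relEnt ν m := by
  have ha' : (0 : ℝ) < a := by exact_mod_cast ha
  have hp' : (0 : ℝ) < p := by exact_mod_cast hp
  by_cases hfin : ν ≪ m ∧ Integrable (llr ν m) ν
  swap
  · have : relEnt ν m = ∞ := by rw [relEnt, if_neg hfin]
    rw [this, ENNReal.mul_top]
    · exact le_top
    · simp [ha']
  obtain ⟨hac, hint⟩ := hfin
  have e : relEnt ν m = ENNReal.ofReal (∫ x, llr ν m x ∂ν) := by rw [relEnt, if_pos ⟨hac, hint⟩]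
  rw [e, ← ENNReal.ofReal_mul (by positivity)]
  refine dv_lower _ _ _ fun f hf => ?_
  have hPf : BddMeasurableFn (fun x => ∫ y, f y ∂(P x)) := hf.kernel P
  have haPf : BddMeasurableFn (fun x => (a : ℝ) * ∫ y, f y ∂(P x)) := by
    obtain ⟨hm, C, hC⟩ := hPf
    refine ⟨hm.const_mul _, a * C, fun x => ?_⟩
    rw [abs_mul, abs_of_pos ha']
    exact mul_le_mul_of_nonneg_left (hC x) ha'.le
  have hfp : BddMeasurableFn (fun x => f x / p) := by
    obtain ⟨hm, C, hC⟩ := hf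
    refine ⟨hm.div_const _, C / p, fun x => ?_⟩
    rw [abs_div, abs_of_pos hp']
    exact div_le_div_of_nonneg_right (hC x) hp'.le
  have hbind : ∫ x, f x ∂(ν.bind P) = ∫ x, ∫ y, f y ∂(P x) ∂ν := by
    have := Kernel.integral_comp (κ := Kernel.const Unit ν) (η := P) (a := ()) (f := f)
      (hf.integrable' _)
    rwa [Kernel.comp_apply, Kernel.const_apply] at this
  have hpt : ∀ x, ENNReal.ofReal (Real.exp ((a : ℝ) * ∫ y, f y ∂(P x))) ≤
      (∫⁻ y, ENNReal.ofReal (Real.exp (f y / p)) ∂(P x)) ^ (p * a) := by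
    intro x
    have j : Real.exp (∫ y, f y / p ∂(P x)) ≤ ∫ y, Real.exp (f y / p) ∂(P x) :=
      convexOn_exp.map_integral_le Real.continuous_exp.continuousOn isClosed_univ
        (ae_of_all _ fun _ => Set.mem_univ _) (hfp.integrable' _)
        ((integrable_exp_bdd hfp).integrable' _)
    rw [← ofReal_integral_eq_lintegral_ofReal ((integrable_exp_bdd hfp).integrable' _)
      (ae_of_all _ fun _ => (Real.exp_pos _).le), ← ENNReal.ofReal_pow
        (integral_nonneg fun _ => (Real.exp_pos _).le)]
    refine ENNReal.ofReal_le_ofReal ?_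
    have e2 : Real.exp ((a : ℝ) * ∫ y, f y ∂(P x)) = Real.exp (∫ y, f y / p ∂(P x)) ^ (p * a) := by
      rw [← Real.exp_nat_mul, integral_div]
      congr 1
      push_cast
      field_simp
    rw [e2]
    exact pow_le_pow_left₀ (Real.exp_pos _).le j _
  have hexp : ∫ x, Real.exp ((a : ℝ) * ∫ y, f y ∂(P x)) ∂m ≤ (∫ x, Real.exp (f x) ∂m) ^ a := by
    rw [← ENNReal.ofReal_le_ofReal_iff (by positivity),
      ENNReal.ofReal_pow (integral_nonneg fun _ => (Real.exp_pos _).le),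
      ofReal_integral_eq_lintegral_ofReal ((integrable_exp_bdd haPf).integrable' _)
      (ae_of_all _ fun _ => (Real.exp_pos _).le),
      ofReal_integral_eq_lintegral_ofReal ((integrable_exp_bdd hf).integrable' _)
      (ae_of_all _ fun _ => (Real.exp_pos _).le)]
    refine (lintegral_mono hpt).trans ((h _ (integrable_exp_bdd hfp).1.ennreal_ofReal).trans_eq ?_)
    congr 1
    refine lintegral_congr fun x => ?_
    rw [← ENNReal.ofReal_pow (Real.exp_pos _).le, ← Real.exp_nat_mul]
    congr 2
    field_simp
  have hlog : Real.log (∫ x, Real.exp ((a : ℝ) * ∫ y, f y ∂(P x)) ∂m) ≤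
      a * Real.log (∫ x, Real.exp (f x) ∂m) := by
    rw [← Real.log_pow]
    exact Real.log_le_log (integral_exp_pos ((integrable_exp_bdd haPf).integrable' _)) hexp
  have hup := dv_upper ν m hac hint _ haPf
  rw [integral_const_mul] at hup
  rw [hbind]
  have h3 : (a : ℝ) * ∫ x, ∫ y, f y ∂(P x) ∂ν ≤
      a * (1 / a * ∫ x, llr ν m x ∂ν + Real.log (∫ x, Real.exp (f x) ∂m)) := by
    rw [mul_add, ← mul_assoc, mul_one_div_cancel ha'.ne', one_mul]
    linarith
  exact le_of_mul_le_mul_left h3 ha'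

/-- (Dimension-free exponential entropy decay for product dynamics.)
Let `(κ_t)` be a Markov semigroup with invariant probability measure `μ`, and `(κ̂_t)` a dual
family of Markov kernels with respect to `μ`.  If `κ̂_{t₁}` is hypercontractive from
`L^{4/3}(μ)` to `L²(μ)` for some `t₁ > 0`, then there exist `c₀, λ₀ > 0`, depending only on
`t₁` (in particular independent of `N`), such that for all `N ≥ 1`, all probability measures
`ν^N` on `E^N`, and all `t ≥ 0`,
`Ent(ν^N κ_t^{⊗N} | μ^{⊗N}) ≤ c₀ e^{−λ₀ t} Ent(ν^N | μ^{⊗N})`. -/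
theorem statement_14 (t₁ : ℝ) (ht₁ : 0 < t₁) :
    ∃ c₀ lam₀ : ℝ, 0 < c₀ ∧ 0 < lam₀ ∧
      ∀ (E : Type) [MeasurableSpace E] (μ : Measure E) [IsProbabilityMeasure μ]
        (κ κhat : ℝ → Kernel E E),
        IsMarkovSemigroup κ →
        (∀ t : ℝ, IsMarkovKernel (κhat t)) →
        -- invariance of μ
        (∀ t : ℝ, 0 ≤ t → μ.bind (fun x => κ t x) = μ) →
        -- duality of κ̂ and κ with respect to μ
        (∀ t : ℝ, 0 ≤ t → ∀ f g : E → ℝ, BddMeasurableFn f → BddMeasurableFn g →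
          ∫ x, f x * (∫ y, g y ∂(κ t x)) ∂μ = ∫ x, g x * (∫ y, f y ∂(κhat t x)) ∂μ) →
        -- hypercontractivity of the dual kernel at time t₁
        (∀ g : E → ℝ, BddMeasurableFn g →
          eLpNorm (fun x => ∫ y, g y ∂(κhat t₁ x)) 2 μ ≤ eLpNorm g (4 / 3 : ℝ≥0∞) μ) →
        -- conclusion, uniform in N
        ∀ N : ℕ, 1 ≤ N → ∀ ν : Measure (Fin N → E), IsProbabilityMeasure ν →
          ∀ t : ℝ, 0 ≤ t →
            relEnt (ν.bind fun x => Measure.pi fun i => κ t (x i))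
                (Measure.pi fun _ : Fin N => μ)
              ≤ ENNReal.ofReal (c₀ * Real.exp (-lam₀ * t)) *
                  relEnt ν (Measure.pi fun _ : Fin N => μ) := by
  refine ⟨2, Real.log 2 / t₁, by norm_num, div_pos (Real.log_pos (by norm_num)) ht₁, ?_⟩
  intro E _ μ _ κ κhat hsg hhat hinv hdual hyp N hN ν hν t ht
  have hmk := hsg.markov
  set m : Measure (Fin N → E) := Measure.pi fun _ : Fin N => μ with hm
  change relEnt (ν.bind (piK N (κ t))) m ≤ _
  have hsemi : ∀ s r : ℝ, 0 ≤ s → 0 ≤ r → ∀ ρ : Measure (Fin N → E),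
      ρ.bind (piK N (κ (r + s))) = (ρ.bind (piK N (κ s))).bind (piK N (κ r)) := by
    intro s r hs hr ρ
    rw [Measure.bind_bind (piK N (κ s)).measurable.aemeasurable (piK N (κ r)).measurable.aemeasurable]
    congr 1
    funext x
    rw [piK_apply, piK_apply, pi_bind_piK]
    congr 1
    funext i
    rw [hsg.semigroup s r hs hr, Kernel.comp_apply]
  have hmono : ∀ r : ℝ, 0 ≤ r → ∀ ρ : Measure (Fin N → E), IsProbabilityMeasure ρ →
      relEnt (ρ.bind (piK N (κ r))) m ≤ relEnt ρ m := by
    intro r hr ρ hρ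
    have := contraction m (piK N (κ r)) 1 1 one_pos one_pos (fun g hg => by
      simp only [mul_one, pow_one]
      rw [← Measure.lintegral_bind (piK N (κ r)).measurable.aemeasurable hg.aemeasurable, hm,
        pi_bind_piK]
      have e : μ.bind (κ r) = μ := hinv r hr
      rw [e]) ρ
    simpa using this
  have hhalf : ∀ ρ : Measure (Fin N → E), IsProbabilityMeasure ρ →
      relEnt (ρ.bind (piK N (κ t₁))) m ≤ ENNReal.ofReal (1 / 2) * relEnt ρ m := by
    intro ρ hρ
    have := contraction m (piK N (κ t₁)) 2 2 two_pos two_pos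
      (tensor μ (κ t₁) (one_dim μ (κ t₁) (κhat t₁) (hdual t₁ ht₁.le) hyp) N) ρ
    simpa using this
  have hiter : ∀ (n : ℕ) (r : ℝ), 0 ≤ r →
      relEnt (ν.bind (piK N (κ (n * t₁ + r)))) m ≤ ENNReal.ofReal ((1 / 2) ^ n) * relEnt ν m := by
    intro n r hr
    induction n with
    | zero => simpa using hmono r hr ν hν
    | succ n ih =>
      have e : ((n + 1 : ℕ) : ℝ) * t₁ + r = t₁ + (n * t₁ + r) := by push_cast; ring
      rw [e, hsemi (n * t₁ + r) t₁ (by positivity) ht₁.le]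
      refine (hhalf _ inferInstance).trans ?_
      rw [pow_succ', ENNReal.ofReal_mul (by norm_num), mul_assoc]
      gcongr
  have hfl : (⌊t / t₁⌋₊ : ℝ) ≤ t / t₁ := Nat.floor_le (by positivity)
  have hfl2 : t / t₁ < ⌊t / t₁⌋₊ + 1 := Nat.lt_floor_add_one _
  have h1 := hiter ⌊t / t₁⌋₊ (t - ⌊t / t₁⌋₊ * t₁) (by
    rw [le_div_iff₀ ht₁] at hfl; linarith)
  rw [add_sub_cancel] at h1
  refine h1.trans ?_
  gcongr
  have e1 : ((1 : ℝ) / 2) ^ ⌊t / t₁⌋₊ = Real.exp (-(Real.log 2) * ⌊t / t₁⌋₊) := by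
    rw [mul_comm, Real.exp_nat_mul, Real.exp_neg, Real.exp_log (by norm_num)]
    norm_num
  have e2 : 2 * Real.exp (-(Real.log 2 / t₁) * t) =
      Real.exp (Real.log 2 + -(Real.log 2 / t₁) * t) := by
    rw [Real.exp_add, Real.exp_log (by norm_num)]
  rw [e1, e2, Real.exp_le_exp]
  have hl : 0 < Real.log 2 := Real.log_pos (by norm_num)
  have e3 : Real.log 2 / t₁ * t = Real.log 2 * (t / t₁) := by ring
  have := mul_lt_mul_of_pos_left hfl2 hl
  rw [neg_mul, neg_mul, e3]
  linarith
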